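/- Let w = v_{r+1}v_r⋯v_1 be the decomposition of w ∈ W with v_i ∈ W_{Δ_i}^{Δ_{i−1}}, and let 1 ≤ m ≤ r. (1) If ℓ(v_m) < m, then there exists γ ∈ R^+ such that ⟨χ_m, γ^∨⟩ = 1, ℓ(ws_γ) = ℓ(w) + 1, and gr(ws_γ) = gr(w) + e_m. (2) If ℓ(v_m) = m, then there exists γ ∈ R^+ with γ^∨ ∈ Q_P^∨ such that ⟨χ_m, γ^∨⟩ = 1, ℓ(ws_γ) = ℓ(w) + 1 − ⟨2ρ, γ^∨⟩, and gr(q_{γ^∨}) + gr(ws_γ) = gr(w) + e_m. -/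

import Mathlib

/-!
**Lengths.** Everything about lengths follows from the exchange condition, in the form that
`ℓ(w s_i) = ℓ(w) ± 1` according to the sign of `w α_i`.  Hence `v` is minimal in `v W_S` exactly
when it sends the simple roots of `S` to positive roots (`Good`), in that case
`ℓ(v u) = ℓ(v) + ℓ(u)` for `u ∈ W_S` (`Good.len_mul`), and the minimal representative of a coset is
unique (`Good.unique`).  So the factors of a decomposition are determined by their product, and
their lengths add up to its length.

**Type `A`.** For `j ≤ r` the minimal representatives in `W_{Δ_j}^{Δ_{j-1}}` are the cycles
`s_{k+1} ⋯ s_j` with `0 ≤ k ≤ j` (`MinRep.eq_C`), of length `j - k`.  Their action on the roots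
`α_{a+1} + ⋯ + α_b` of `R_P` permutes the indices `0, …, r` (`act_C_D`), which gives all the
commutation rules that are needed.

**Part (1)** (`raise_one`). If `v_m = s_{k+1} ⋯ s_m` with `k ≥ 1`, replace it by `s_k v_m`.  This
multiplies `w` on the right by `s_γ`, where `γ = (v_{m-1} ⋯ v_1)⁻¹ (α_k + ⋯ + α_m)`; the
`m`-th coordinates of `γ` and `γ^∨` are `1` because `W_{Δ_{m-1}}` does not change them.

**Part (2)** (`raise_two`). If `v_m = s_1 ⋯ s_m`, take `γ = α_a + ⋯ + α_m`, where `a` is least such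
that `v_a, …, v_{m-1}` are all nontrivial; so `a = 1` or `v_{a-1} = 1`.  Then in `w s_γ` the factor
`v_m` becomes trivial, each of `v_a, …, v_{m-1}` loses its first letter, and `v_{a-1} = 1` becomes
`s_1 ⋯ s_{a-1}` (`P_lowered`).  This matches `gr(q_{γ^∨})` in every coordinate.  The length formula
is the sum of the coordinates, since the total degree of `q_λ` is `⟨2ρ, λ⟩` (`sum_grQlam`).
-/

open scoped BigOperators

/-- A reduced crystallographic root system with a fixed base `α_1, …, α_n` of simple
roots, bundled with its Weyl group `W`.  A root `γ` is recorded by its integer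
coordinate vector in the basis of simple roots (so the `i`-th simple root is
`Pi.single i 1`), and `cor γ` is the coordinate vector of the coroot `γ^∨` in the
basis of simple coroots (hence `cor γ i = ⟨χ_i, γ^∨⟩` for the fundamental weights
`χ_i`).  `A i j = ⟨α_i, α_j^∨⟩` is the Cartan matrix, `σ γ` is the reflection `s_γ`
and `act` is the action of the Weyl group on the root lattice. -/
structure RootSystemData (n : ℕ) where
  A : Fin n → Fin n → ℤ
  R : Finset (Fin n → ℤ)
  cor : (Fin n → ℤ) → (Fin n → ℤ)
  W : Type
  [grp : Group W]
  σ : (Fin n → ℤ) → W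
  act : W → (Fin n → ℤ) → (Fin n → ℤ)
  simple_mem : ∀ i : Fin n, (Pi.single i 1 : Fin n → ℤ) ∈ R
  root_ne_zero : ∀ γ ∈ R, γ ≠ 0
  neg_mem : ∀ γ ∈ R, -γ ∈ R
  pos_or_neg : ∀ γ ∈ R, (∀ i, 0 ≤ γ i) ∨ (∀ i, γ i ≤ 0)
  reduced : ∀ γ ∈ R, ∀ k : ℤ, k • γ ∈ R → k = 1 ∨ k = -1
  cor_simple : ∀ i : Fin n, cor (Pi.single i 1) = Pi.single i 1
  cor_neg : ∀ γ ∈ R, cor (-γ) = -(cor γ)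
  pair_self : ∀ γ ∈ R, (∑ i, ∑ j, γ i * A i j * cor γ j) = 2
  act_one : ∀ x, act 1 x = x
  act_mul : ∀ w w' x, act (w * w') x = act w (act w' x)
  act_refl : ∀ γ ∈ R, ∀ x, act (σ γ) x = x - (∑ i, ∑ j, x i * A i j * cor γ j) • γ
  act_mem : ∀ (w : W), ∀ γ ∈ R, act w γ ∈ R
  cor_refl : ∀ γ ∈ R, ∀ β ∈ R,
    cor (act (σ γ) β) = cor β - (∑ i, ∑ j, γ i * A i j * cor β j) • cor γ
  refl_sq : ∀ γ ∈ R, σ γ * σ γ = 1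
  refl_act : ∀ (w : W), ∀ γ ∈ R, σ (act w γ) = w * σ γ * w⁻¹
  act_faithful : ∀ w w' : W, (∀ γ ∈ R, act w γ = act w' γ) → w = w'
  generated : ∀ w : W, ∃ l : List (Fin n), w = (l.map fun i => σ (Pi.single i 1)).prod

namespace RootSystemData

instance {n : ℕ} (c : RootSystemData n) : Group c.W := c.grp

/-- the pairing `⟨x, λ⟩` between an element `x` of the root lattice (coordinates in
the basis of simple roots) and an element `λ` of the coroot lattice (coordinates in
the basis of simple coroots) -/
def pair {n : ℕ} (c : RootSystemData n) (x lam : Fin n → ℤ) : ℤ :=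
  ∑ i, ∑ j, x i * c.A i j * lam j

/-- the `i`-th simple root -/
def sroot {n : ℕ} (_c : RootSystemData n) (i : Fin n) : Fin n → ℤ := Pi.single i 1

/-- the simple reflection `s_i` -/
def s {n : ℕ} (c : RootSystemData n) (i : Fin n) : c.W := c.σ (c.sroot i)

/-- `s_{α_{t+1}}` for a `0`-based natural number index `t` (`= 1` when out of range) -/
def sN {n : ℕ} (c : RootSystemData n) (t : ℕ) : c.W := if h : t < n then c.s ⟨t, h⟩ else 1

/-- `⟨2ρ, λ⟩ = Σ_{β ∈ R^+} ⟨β, λ⟩`, where `ρ` is the half-sum of the positive roots -/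
def pairTwoRho {n : ℕ} (c : RootSystemData n) (lam : Fin n → ℤ) : ℤ :=
  ∑ β ∈ c.R, if ∀ i, 0 ≤ β i then c.pair β lam else 0

/-- the length of `w ∈ W` with respect to the simple reflections -/
noncomputable def len {n : ℕ} (c : RootSystemData n) (w : c.W) : ℕ :=
  sInf {k | ∃ l : List (Fin n), l.length = k ∧ (l.map c.s).prod = w}

/-- the parabolic subgroup `W_S` generated by the simple reflections indexed by `S` -/
def Wsub {n : ℕ} (c : RootSystemData n) (S : Finset (Fin n)) : Subgroup c.W :=
  Subgroup.closure (c.s '' ↑S)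

/-- `w ∈ W_T^S`: `w ∈ W_T` and `w` has minimal length in the coset `w W_S` -/
def MinRep {n : ℕ} (c : RootSystemData n) (T S : Finset (Fin n)) (w : c.W) : Prop :=
  w ∈ c.Wsub T ∧ ∀ u ∈ c.Wsub S, c.len w ≤ c.len (w * u)

/-- `w` is the longest element of `W_S` -/
def IsLongest {n : ℕ} (c : RootSystemData n) (S : Finset (Fin n)) (w : c.W) : Prop :=
  w ∈ c.Wsub S ∧ ∀ v ∈ c.Wsub S, c.len v ≤ c.len w

end RootSystemData

/-- the support of `γ` is contained in `S`, i.e. `γ` lies in the span of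
`{α_i : i ∈ S}` (for a root `γ`, membership in `R_S`) -/
def suppIn {n : ℕ} (S : Finset (Fin n)) (γ : Fin n → ℤ) : Prop :=
  ∀ i, i ∉ S → γ i = 0

/-- `Δ_j` for `0 ≤ j ≤ r+1`: the index set of the first `j` simple roots for `j ≤ r`,
and all of `Δ` for `j = r+1`.  (Indices of simple roots are `0`-based, so
`α_1, …, α_j` correspond to the indices `0, …, j-1`.) -/
def deltaSet (n r j : ℕ) : Finset (Fin n) :=
  if j = r + 1 then Finset.univ else Finset.univ.filter fun i => (i : ℕ) < j

namespace RootSystemData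

/-- `v 0, …, v r` (standing for `v_1, …, v_{r+1}`) is the decomposition of `w`
associated to `(Δ_P, Υ)`:  each `v_i ∈ W_{Δ_i}^{Δ_{i-1}}` and `w = v_{r+1} v_r ⋯ v_1`. -/
def IsDecomp {n : ℕ} (c : RootSystemData n) (r : ℕ) (w : c.W)
    (v : Fin (r + 1) → c.W) : Prop :=
  (∀ k : Fin (r + 1), c.MinRep (deltaSet n r ((k : ℕ) + 1)) (deltaSet n r (k : ℕ)) (v k)) ∧
    w = (List.ofFn v).reverse.prod

/-- the first `m` simple roots `α_1, …, α_m` form a path of type `A_m`: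
`⟨α_i, α_j^∨⟩ = -1` if `|i-j| = 1` and `⟨α_i, α_j^∨⟩ = 0` if `|i-j| ≥ 2`. -/
def PathA {n : ℕ} (c : RootSystemData n) (m : ℕ) : Prop :=
  ∀ i j : Fin n, (i : ℕ) < m → (j : ℕ) < m →
    (((i : ℕ) + 1 = (j : ℕ) ∨ (j : ℕ) + 1 = (i : ℕ)) → c.A i j = -1) ∧
    ((i : ℕ) + 2 ≤ (j : ℕ) ∨ (j : ℕ) + 2 ≤ (i : ℕ) → c.A i j = 0)

/-- `u_{[k,m]} = s_k s_{k+1} ⋯ s_m` (`1`-based indices; `u_{[k,m]} = 1` for `k > m`) -/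
def uu {n : ℕ} (c : RootSystemData n) (k m : ℕ) : c.W :=
  ((List.range' k (m + 1 - k)).map fun t => c.sN (t - 1)).prod

/-- `u_i^{(m)} = s_{m-i+1} s_{m-i+2} ⋯ s_m` -/
def uElt {n : ℕ} (c : RootSystemData n) (i m : ℕ) : c.W := c.uu (m - i + 1) m

end RootSystemData

/-- strict lexicographic order on `Fin m → ℤ` -/
def lexLT {m : ℕ} (x y : Fin m → ℤ) : Prop :=
  ∃ j, x j < y j ∧ ∀ k, k < j → x k = y k

/-- lexicographic order on `Fin m → ℤ` -/
def lexLE {m : ℕ} (x y : Fin m → ℤ) : Prop := x = y ∨ lexLT x y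

/-- the grading `gr(q_{α_{j+1}^∨}) ∈ ℤ^{r+1}` (for the `0`-based index `j < r`), when
`Δ_P` is of type `A_r`: in `1`-based terms, `gr(q_{α_1^∨}) = 2·e_1` and
`gr(q_{α_j^∨}) = (1-j)·e_{j-1} + (1+j)·e_j` for `2 ≤ j ≤ r`. -/
def grQ (r j : ℕ) : Fin (r + 1) → ℤ := fun k =>
  (if (k : ℕ) = j then (j : ℤ) + 2 else 0) + (if (k : ℕ) + 1 = j then -(j : ℤ) else 0)

/-- the grading `gr(q_λ)` for `λ ∈ Q_P^∨` (coordinates in simple coroots), extended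
additively from the `gr(q_{α_j^∨})`, when `Δ_P` is of type `A_r` -/
def grQlam (n r : ℕ) (lam : Fin n → ℤ) : Fin (r + 1) → ℤ :=
  fun k => ∑ j, lam j * grQ r (j : ℕ) k

namespace RootSystemData

/-! ### Roots, signs and the linear action -/

/-- Nonnegativity of all coordinates; for a root this is membership in `R^+`. -/
def Pos {n : ℕ} (x : Fin n → ℤ) : Prop := ∀ i, 0 ≤ x i

section Basics

variable {n : ℕ} (c : RootSystemData n)

lemma pair_sub_left (x y l : Fin n → ℤ) : c.pair (x - y) l = c.pair x l - c.pair y l := by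
  simp [pair, sub_mul, Finset.sum_sub_distrib]

lemma pair_add_left (x y l : Fin n → ℤ) : c.pair (x + y) l = c.pair x l + c.pair y l := by
  simp [pair, add_mul, Finset.sum_add_distrib]

lemma pair_smul_left (k : ℤ) (x l : Fin n → ℤ) : c.pair (k • x) l = k * c.pair x l := by
  simp [pair, Finset.mul_sum, mul_assoc]

lemma pair_simple_right (x : Fin n → ℤ) (i : Fin n) :
    c.pair x (Pi.single i 1) = ∑ k, x k * c.A k i := by
  simp [pair, Pi.single_apply]

lemma sroot_mem (i : Fin n) : c.sroot i ∈ c.R := c.simple_mem i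

lemma pos_sroot (i : Fin n) : Pos (c.sroot i) := by
  intro j
  simp only [sroot, Pi.single_apply]
  split_ifs <;> simp

lemma pos_neg_of_not_pos {β : Fin n → ℤ} (hβ : β ∈ c.R) (h : ¬ Pos β) : Pos (-β) := by
  rcases c.pos_or_neg β hβ with h' | h'
  · exact absurd h' h
  · intro i
    simpa using h' i

lemma not_pos_neg {β : Fin n → ℤ} (hβ : β ∈ c.R) (h : Pos β) : ¬ Pos (-β) := by
  intro h'
  apply c.root_ne_zero β hβ
  funext i
  have h1 := h i
  have h2 := h' i
  simp only [Pi.neg_apply] at h2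
  simp only [Pi.zero_apply]
  omega

lemma pair_sroot (i : Fin n) : c.pair (c.sroot i) (Pi.single i 1) = 2 := by
  have := c.pair_self _ (c.simple_mem i)
  rw [c.cor_simple] at this
  exact this

lemma act_s (i : Fin n) (x : Fin n → ℤ) :
    c.act (c.s i) x = x - c.pair x (Pi.single i 1) • c.sroot i := by
  have := c.act_refl _ (c.simple_mem i) x
  rw [c.cor_simple] at this
  exact this

lemma act_s_sroot (i : Fin n) : c.act (c.s i) (c.sroot i) = -c.sroot i := by
  rw [act_s, pair_sroot]
  funext j
  simp
  ring

lemma s_mul_s (i : Fin n) : c.s i * c.s i = 1 := c.refl_sq _ (c.simple_mem i)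

lemma s_inv (i : Fin n) : (c.s i)⁻¹ = c.s i := inv_eq_of_mul_eq_one_left (c.s_mul_s i)

lemma act_add (w : c.W) : ∀ x y, c.act w (x + y) = c.act w x + c.act w y := by
  obtain ⟨l, rfl⟩ := c.generated w
  induction l with
  | nil => intro x y; simp [c.act_one]
  | cons i l ih =>
    intro x y
    simp only [List.map_cons, List.prod_cons, c.act_mul]
    rw [ih]
    change c.act (c.s i) _ = c.act (c.s i) _ + c.act (c.s i) _
    simp only [act_s, pair_add_left, add_smul]
    abel

/-- The action of a fixed element of the Weyl group as an additive map. -/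
def actHom (w : c.W) : (Fin n → ℤ) →+ (Fin n → ℤ) := AddMonoidHom.mk' (c.act w) (c.act_add w)

lemma act_neg (w : c.W) (x : Fin n → ℤ) : c.act w (-x) = -c.act w x := map_neg (c.actHom w) x

lemma eq_sum_sroot (x : Fin n → ℤ) : x = ∑ i, x i • c.sroot i := by
  funext j
  simp [sroot, Pi.single_apply]

lemma act_eq_sum (w : c.W) (x : Fin n → ℤ) :
    c.act w x = ∑ i, x i • c.act w (c.sroot i) := by
  have h : c.actHom w x = ∑ i, x i • c.actHom w (c.sroot i) := by
    conv_lhs => rw [c.eq_sum_sroot x]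
    rw [map_sum]
    simp only [map_zsmul]
  exact h

/-- A simple reflection permutes the positive roots other than its own simple root: such a
root has a second positive coordinate, which the reflection does not touch. -/
lemma pos_act_s {β : Fin n → ℤ} (hβ : β ∈ c.R) (hp : Pos β) (i : Fin n) (hne : β ≠ c.sroot i) :
    Pos (c.act (c.s i) β) := by
  have hex : ∃ j, j ≠ i ∧ 0 < β j := by
    by_contra! hcon
    have hβi : β = β i • c.sroot i := by
      funext j
      by_cases hj : j = i
      · subst hj; simp [sroot]
      · have h1 := hcon j hj
        have h2 := hp j
        simp [sroot, hj]
        omega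
    rcases c.reduced _ (c.sroot_mem i) (β i) (hβi ▸ hβ) with h | h
    · rw [h, one_smul] at hβi
      exact hne hβi
    · have := hp i
      omega
  obtain ⟨j, hji, hj⟩ := hex
  rcases c.pos_or_neg _ (c.act_mem (c.s i) β hβ) with h | h
  · exact h
  · have := h j
    rw [act_s] at this
    simp [sroot, hji] at this
    omega

/-! ### Length and descents -/

/-- The exchange condition. -/
lemma exchange (i : Fin n) (l : List (Fin n))
    (h : ¬ Pos (c.act (l.map c.s).prod (c.sroot i))) :
    ∃ l' : List (Fin n), l'.length + 1 = l.length ∧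
      (l'.map c.s).prod = (l.map c.s).prod * c.s i := by
  induction l with
  | nil =>
    simp only [List.map_nil, List.prod_nil, c.act_one] at h
    exact absurd (c.pos_sroot i) h
  | cons j l ih =>
    by_cases hl : Pos (c.act (l.map c.s).prod (c.sroot i))
    · have hβ := c.act_mem (l.map c.s).prod _ (c.sroot_mem i)
      by_cases he : c.act (l.map c.s).prod (c.sroot i) = c.sroot j
      · refine ⟨l, by simp, ?_⟩
        have h1 := c.refl_act (l.map c.s).prod _ (c.sroot_mem i)
        rw [he] at h1
        change c.s j = _ * c.s i * _ at h1
        simp only [List.map_cons, List.prod_cons]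
        rw [mul_assoc, ← inv_mul_eq_iff_eq_mul, s_inv, h1]
        group
      · simp only [List.map_cons, List.prod_cons, c.act_mul] at h
        exact absurd (c.pos_act_s hβ hl j he) h
    · obtain ⟨l', h1, h2⟩ := ih hl
      refine ⟨j :: l', by simp [h1], ?_⟩
      simp [h2, mul_assoc]

lemma len_le (l : List (Fin n)) : c.len (l.map c.s).prod ≤ l.length :=
  Nat.sInf_le ⟨l, rfl, rfl⟩

lemma exists_reduced (w : c.W) :
    ∃ l : List (Fin n), l.length = c.len w ∧ (l.map c.s).prod = w := by
  have hne : {k | ∃ l : List (Fin n), l.length = k ∧ (l.map c.s).prod = w}.Nonempty := by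
    obtain ⟨l, hl⟩ := c.generated w
    exact ⟨l.length, l, rfl, hl.symm⟩
  exact Nat.sInf_mem hne

lemma len_one : c.len 1 = 0 := by
  have := c.len_le []
  simpa using this

lemma eq_one_of_len (w : c.W) (h : c.len w = 0) : w = 1 := by
  obtain ⟨l, h1, h2⟩ := c.exists_reduced w
  rw [h, List.length_eq_zero_iff] at h1
  subst h1
  simpa using h2.symm

lemma len_mul_s_le (w : c.W) (i : Fin n) : c.len (w * c.s i) ≤ c.len w + 1 := by
  obtain ⟨l, h1, h2⟩ := c.exists_reduced w
  have := c.len_le (l ++ [i])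
  simpa [h1, h2] using this

lemma len_mul_s_of_not_pos (w : c.W) (i : Fin n) (h : ¬ Pos (c.act w (c.sroot i))) :
    c.len (w * c.s i) + 1 = c.len w := by
  obtain ⟨l, h1, rfl⟩ := c.exists_reduced w
  obtain ⟨l', h3, h4⟩ := c.exchange i l h
  have h5 := c.len_le l'
  have h6 := c.len_mul_s_le ((l.map c.s).prod * c.s i) i
  rw [mul_assoc, s_mul_s, mul_one] at h6
  rw [h4] at h5
  omega

lemma len_mul_s_of_pos (w : c.W) (i : Fin n) (h : Pos (c.act w (c.sroot i))) :
    c.len (w * c.s i) = c.len w + 1 := by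
  have := c.len_mul_s_of_not_pos (w * c.s i) i (by
    rw [c.act_mul, act_s_sroot, act_neg]
    exact c.not_pos_neg (c.act_mem w _ (c.sroot_mem i)) h)
  rw [mul_assoc, s_mul_s, mul_one] at this
  omega

/-! ### Parabolic subgroups and minimal coset representatives -/

lemma s_mem_Wsub {S : Finset (Fin n)} {i : Fin n} (hi : i ∈ S) : c.s i ∈ c.Wsub S :=
  Subgroup.subset_closure ⟨i, hi, rfl⟩

lemma Wsub_mono {S T : Finset (Fin n)} (h : S ⊆ T) : c.Wsub S ≤ c.Wsub T :=
  Subgroup.closure_mono (Set.image_mono (by exact_mod_cast h))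

lemma Wsub_induction {S : Finset (Fin n)} (p : c.W → Prop) (h1 : p 1)
    (hs : ∀ u i, i ∈ S → u ∈ c.Wsub S → p u → p (u * c.s i)) : ∀ u ∈ c.Wsub S, p u := by
  intro u hu
  induction hu using Subgroup.closure_induction_right with
  | one => exact h1
  | mul_right x hx y hy ih =>
    obtain ⟨i, hi, rfl⟩ := hy
    exact hs x i hi hx ih
  | mul_inv_cancel x hx y hy ih =>
    obtain ⟨i, hi, rfl⟩ := hy
    rw [s_inv]
    exact hs x i hi hx ih

lemma Wsub_induction_left {S : Finset (Fin n)} (p : c.W → Prop) (h1 : p 1)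
    (hs : ∀ u i, i ∈ S → u ∈ c.Wsub S → p u → p (c.s i * u)) : ∀ u ∈ c.Wsub S, p u := by
  intro u hu
  induction hu using Subgroup.closure_induction_left with
  | one => exact h1
  | mul_left y hy x hx ih =>
    obtain ⟨i, hi, rfl⟩ := hy
    exact hs x i hi hx ih
  | inv_mul_cancel y hy x hx ih =>
    obtain ⟨i, hi, rfl⟩ := hy
    rw [s_inv]
    exact hs x i hi hx ih

lemma act_Wsub_apply {S : Finset (Fin n)} {j : Fin n} (hj : j ∉ S) :
    ∀ u ∈ c.Wsub S, ∀ x, c.act u x j = x j := by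
  apply c.Wsub_induction_left
  · intro x; rw [c.act_one]
  · intro u i hi _ ih x
    have hne : j ≠ i := fun h => hj (h ▸ hi)
    rw [c.act_mul, act_s]
    simp [sroot, hne, ih x]

lemma cor_Wsub_apply {S : Finset (Fin n)} {j : Fin n} (hj : j ∉ S) :
    ∀ u ∈ c.Wsub S, ∀ β ∈ c.R, c.cor (c.act u β) j = c.cor β j := by
  apply c.Wsub_induction_left
  · intro x _; rw [c.act_one]
  · intro u i hi _ ih β hβ
    have hne : j ≠ i := fun h => hj (h ▸ hi)
    have h1 := c.cor_refl _ (c.simple_mem i) _ (c.act_mem u β hβ)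
    rw [c.cor_simple] at h1
    rw [c.act_mul]
    change c.cor (c.act (c.σ (Pi.single i 1)) _) j = _
    rw [h1]
    simp [hne, ih β hβ]

/-- `v` sends every simple root of `S` to a positive root; equivalently `v` has minimal length
in `v W_S`. -/
def Good (S : Finset (Fin n)) (v : c.W) : Prop := ∀ i ∈ S, Pos (c.act v (c.sroot i))

lemma Good.pos_act {c : RootSystemData n} {S : Finset (Fin n)} {v : c.W} (hv : c.Good S v)
    {x : Fin n → ℤ} (hx : Pos x) (hS : ∀ j, j ∉ S → x j = 0) : Pos (c.act v x) := by
  intro j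
  rw [act_eq_sum, Finset.sum_apply]
  apply Finset.sum_nonneg
  intro i _
  by_cases hi : i ∈ S
  · exact mul_nonneg (hx i) (hv i hi j)
  · simp [hS i hi]

lemma Good.len_mul {c : RootSystemData n} {S : Finset (Fin n)} {v : c.W} (hv : c.Good S v) :
    ∀ u ∈ c.Wsub S, c.len (v * u) = c.len v + c.len u := by
  apply c.Wsub_induction
  · simp [len_one]
  · intro u i hi hu ih
    have hR := c.act_mem u _ (c.sroot_mem i)
    have hsupp : ∀ j, j ∉ S → c.act u (c.sroot i) j = 0 := by
      intro j hj
      have hne : j ≠ i := fun h => hj (h ▸ hi)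
      rw [c.act_Wsub_apply hj u hu]
      simp [sroot, hne]
    rw [← mul_assoc]
    by_cases hp : Pos (c.act u (c.sroot i))
    · rw [c.len_mul_s_of_pos u i hp, c.len_mul_s_of_pos (v * u) i, ih]
      · omega
      · rw [c.act_mul]
        exact hv.pos_act hp hsupp
    · have h1 := c.len_mul_s_of_not_pos u i hp
      have h2 := c.len_mul_s_of_not_pos (v * u) i (by
        rw [c.act_mul]
        have h3 : Pos (c.act v (-c.act u (c.sroot i))) :=
          hv.pos_act (c.pos_neg_of_not_pos hR hp) (fun j hj => by simp [hsupp j hj])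
        have h4 := c.not_pos_neg (c.act_mem v _ (c.neg_mem _ hR)) h3
        rwa [← act_neg, neg_neg] at h4)
      omega

lemma MinRep.good {c : RootSystemData n} {S T : Finset (Fin n)} {v : c.W}
    (h : c.MinRep T S v) : c.Good S v := by
  intro i hi
  by_contra hp
  have h1 := c.len_mul_s_of_not_pos v i hp
  have h2 := h.2 _ (c.s_mem_Wsub hi)
  omega

lemma Good.minRep {c : RootSystemData n} {S T : Finset (Fin n)} {v : c.W}
    (h : c.Good S v) (hT : v ∈ c.Wsub T) : c.MinRep T S v :=
  ⟨hT, fun u hu => by rw [h.len_mul u hu]; omega⟩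

/-- A coset of `W_S` has only one minimal representative: the factor relating two of them
has length zero. -/
lemma Good.unique {c : RootSystemData n} {S : Finset (Fin n)} {v v' u u' : c.W}
    (hv : c.Good S v) (hv' : c.Good S v') (hu : u ∈ c.Wsub S) (hu' : u' ∈ c.Wsub S)
    (h : v * u = v' * u') : v = v' := by
  have h1 : v = v' * (u' * u⁻¹) := by rw [← mul_assoc, ← h]; group
  have h2 : v' = v * (u * u'⁻¹) := by rw [← mul_assoc, h]; group
  have h3 := hv'.len_mul _ (mul_mem hu' (inv_mem hu))
  have h4 := hv.len_mul _ (mul_mem hu (inv_mem hu'))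
  rw [← h1] at h3
  rw [← h2] at h4
  have h5 := c.eq_one_of_len (u' * u⁻¹) (by omega)
  rw [h5, mul_one] at h1
  exact h1

/-- `⟨2ρ, α_i^∨⟩ = 2`, because `s_i` permutes the positive roots other than `α_i` and negates
their pairing with `α_i^∨`. -/
lemma pairTwoRho_simple (i : Fin n) : c.pairTwoRho (Pi.single i 1) = 2 := by
  classical
  have hdef : c.pairTwoRho (Pi.single i 1) =
      ∑ β ∈ c.R.filter Pos, c.pair β (Pi.single i 1) := by
    rw [Finset.sum_filter]
    exact Finset.sum_congr rfl fun β _ => if_congr Iff.rfl rfl rfl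
  have hmem : c.sroot i ∈ c.R.filter Pos := by
    simp [c.sroot_mem i, c.pos_sroot i]
  rw [hdef, ← Finset.add_sum_erase _ _ hmem, pair_sroot]
  have key : ∀ β, c.pair (c.act (c.s i) β) (Pi.single i 1) = -c.pair β (Pi.single i 1) := by
    intro β
    rw [act_s, pair_sub_left, pair_smul_left, pair_sroot]
    ring
  have hinv : ∀ β, c.act (c.s i) (c.act (c.s i) β) = β := by
    intro β
    rw [← c.act_mul, s_mul_s, c.act_one]
  have hz : ∑ β ∈ (c.R.filter Pos).erase (c.sroot i), c.pair β (Pi.single i 1) = 0 := by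
    apply Finset.sum_involution (fun β _ => c.act (c.s i) β)
    · intro β _
      rw [key]; ring
    · intro β _ hne heq
      have := key β
      rw [heq] at this
      omega
    · intro β hβ
      simp only [Finset.mem_erase, Finset.mem_filter] at hβ ⊢
      obtain ⟨h1, h2, h3⟩ := hβ
      refine ⟨?_, c.act_mem _ _ h2, c.pos_act_s h2 h3 i h1⟩
      intro heq
      have h4 := hinv β
      rw [heq, act_s_sroot] at h4
      exact c.not_pos_neg (c.sroot_mem i) (c.pos_sroot i) (h4 ▸ h3)
    · intro β _
      exact hinv β
  rw [hz]
  rfl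

lemma pairTwoRho_eq (l : Fin n → ℤ) : c.pairTwoRho l = ∑ j, l j * 2 := by
  have hpair : ∀ β, c.pair β l = ∑ j, l j * c.pair β (Pi.single j 1) := by
    intro β
    simp only [pair_simple_right, Finset.mul_sum]
    rw [Finset.sum_comm]
    simp only [pair]
    exact Finset.sum_congr rfl fun i _ => Finset.sum_congr rfl fun j _ => by ring
  have : c.pairTwoRho l = ∑ j, l j * c.pairTwoRho (Pi.single j 1) := by
    simp only [pairTwoRho, Finset.mul_sum]
    rw [Finset.sum_comm]
    refine Finset.sum_congr rfl fun β _ => ?_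
    split_ifs
    · exact hpair β
    · simp
  rw [this]
  simp only [pairTwoRho_simple]

end Basics

/-! ### The type `A` part -/

section TypeA

variable {n : ℕ} (c : RootSystemData n) {r : ℕ}

/-- `α_1 + ⋯ + α_b`. -/
def X (n b : ℕ) : Fin n → ℤ := fun i => if (i : ℕ) < b then 1 else 0

/-- `D a b = (α_1 + ⋯ + α_b) - (α_1 + ⋯ + α_a)`, which is the root `α_{a+1} + ⋯ + α_b` of `R_P`
when `a < b ≤ r` and its negative when the two indices are exchanged.  It plays the role of
`ε_a - ε_b`, and `W_P` acts on it by permuting the indices `0, …, r`. -/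
def D (n a b : ℕ) : Fin n → ℤ := X n b - X n a

lemma D_succ (t : ℕ) (h : t < n) : D n t (t + 1) = c.sroot ⟨t, h⟩ := by
  funext i
  simp only [D, X, sroot, Pi.sub_apply, Pi.single_apply, Fin.ext_iff]
  split_ifs <;> omega

lemma pos_D {a b : ℕ} (h : a ≤ b) : Pos (D n a b) := by
  intro i
  simp only [D, X, Pi.sub_apply]
  split_ifs <;> omega

lemma D_add (a b d : ℕ) : D n a b + D n b d = D n a d := by
  simp [D]

lemma A_self (i : Fin n) : c.A i i = 2 := by
  have := c.pair_sroot i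
  rw [pair_simple_right] at this
  simpa [sroot, Pi.single_apply] using this

lemma pair_X (hrn : r < n) (hA : c.PathA r) (t : Fin n) (ht : (t : ℕ) < r) (b : ℕ) (hb : b ≤ r) :
    c.pair (X n b) (Pi.single t 1) =
      (if b = t + 1 then 1 else 0) - (if b = t then 1 else 0) + if (t : ℕ) = 0 then 1 else 0 := by
  induction b with
  | zero =>
    rw [pair_simple_right]
    simp [X, eq_comm]
  | succ b ih =>
    have hb' : b < n := by omega
    have hX : X n (b + 1) = X n b + c.sroot ⟨b, hb'⟩ := by
      rw [← c.D_succ b hb']; simp [D]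
    have hbt : c.pair (c.sroot ⟨b, hb'⟩) (Pi.single t 1) = c.A ⟨b, hb'⟩ t := by
      rw [pair_simple_right]
      simp [sroot, Pi.single_apply]
    rw [hX, pair_add_left, ih (by omega), hbt]
    obtain ⟨t, htn⟩ := t
    simp only at ht ⊢
    obtain ⟨h1, h2⟩ := hA ⟨b, hb'⟩ ⟨t, htn⟩ (by simp; omega) ht
    simp only at h1 h2
    by_cases e : b = t
    · subst e
      rw [A_self]
      split_ifs <;> omega
    · by_cases e1 : b + 1 = t ∨ t + 1 = b
      · rw [h1 e1]
        split_ifs <;> omega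
      · rw [h2 (by omega)]
        split_ifs <;> omega

lemma act_s_D (hrn : r < n) (hA : c.PathA r) (t : Fin n) (ht : (t : ℕ) < r) {a b : ℕ}
    (ha : a ≤ r) (hb : b ≤ r) :
    c.act (c.s t) (D n a b) =
      D n (Equiv.swap (t : ℕ) (t + 1) a) (Equiv.swap (t : ℕ) (t + 1) b) := by
  rw [act_s]
  have hp : c.pair (D n a b) (Pi.single t 1) =
      ((if b = t + 1 then 1 else 0) - (if b = t then 1 else 0)) -
      ((if a = t + 1 then 1 else 0) - (if a = (t : ℕ) then 1 else 0)) := by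
    rw [D, pair_sub_left, c.pair_X hrn hA t ht b hb, c.pair_X hrn hA t ht a ha]
    ring
  have key : ∀ b : ℕ, X n (Equiv.swap (t : ℕ) (t + 1) b) =
      X n b - ((if b = t + 1 then 1 else 0) - (if b = (t : ℕ) then 1 else 0) : ℤ) • c.sroot t := by
    intro b
    funext i
    rw [Equiv.swap_apply_def]
    simp only [X, sroot, Pi.sub_apply, Pi.smul_apply, Pi.single_apply, Fin.ext_iff, smul_eq_mul]
    split_ifs <;> omega
  rw [hp, D, D, key a, key b]
  simp only [sub_smul]
  abel

/-- The cycle `s_{k+1} s_{k+2} ⋯ s_j`, of length `j - k` for `k ≤ j`. -/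
def C (k : ℕ) : ℕ → c.W
  | 0 => 1
  | j + 1 => if k ≤ j then C k j * c.sN j else 1

/-- The permutation of indices induced by `C k j`. -/
def cyc (k j x : ℕ) : ℕ := if x = j then k else if k ≤ x ∧ x < j then x + 1 else x

lemma C_self (k : ℕ) : c.C k k = 1 := by
  cases k <;> simp [C]

lemma C_succ {k j : ℕ} (h : k ≤ j) : c.C k (j + 1) = c.C k j * c.sN j := by
  simp [C, h]

lemma C_succ_left {k j : ℕ} (h : k < j) : c.C k j = c.sN k * c.C (k + 1) j := by
  induction j with
  | zero => omega
  | succ j ih =>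
    by_cases e : k = j
    · subst e
      rw [C_succ _ le_rfl, C_self, C_self]; simp
    · rw [C_succ _ (by omega), C_succ _ (by omega), ih (by omega), mul_assoc]

lemma sN_eq {t : ℕ} (h : t < n) : c.sN t = c.s ⟨t, h⟩ := by simp [sN, h]

lemma sN_mul_sN {t : ℕ} (h : t < n) : c.sN t * c.sN t = 1 := by
  rw [sN_eq c h, s_mul_s]

lemma σ_D_succ {t : ℕ} (h : t < n) : c.σ (D n t (t + 1)) = c.sN t := by
  rw [c.D_succ t h, sN_eq c h]; rfl

lemma act_C_D (hrn : r < n) (hA : c.PathA r) {k j a b : ℕ} (hk : k ≤ j) (hj : j ≤ r)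
    (ha : a ≤ r) (hb : b ≤ r) : c.act (c.C k j) (D n a b) = D n (cyc k j a) (cyc k j b) := by
  induction j generalizing a b with
  | zero =>
    have hcyc : ∀ x, cyc k 0 x = x := by intro x; simp only [cyc]; split_ifs <;> omega
    simp [C, c.act_one, hcyc]
  | succ j ih =>
    by_cases e : k = j + 1
    · subst e
      have hcyc : ∀ x, cyc (j + 1) (j + 1) x = x := by
        intro x; simp only [cyc]; split_ifs <;> omega
      rw [C_self, c.act_one, hcyc, hcyc]
    · have hsw : ∀ x, x ≤ r → Equiv.swap j (j + 1) x ≤ r := by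
        intro x hx; rw [Equiv.swap_apply_def]; split_ifs <;> omega
      have hcyc : ∀ x, cyc k j (Equiv.swap j (j + 1) x) = cyc k (j + 1) x := by
        intro x; rw [Equiv.swap_apply_def]; simp only [cyc]; split_ifs <;> omega
      rw [C_succ _ (by omega), c.act_mul, c.sN_eq (by omega),
        c.act_s_D hrn hA ⟨j, by omega⟩ (by simp; omega) ha hb,
        ih (by omega) (by omega) (hsw a ha) (hsw b hb), hcyc, hcyc]

lemma D_mem (hrn : r < n) (hA : c.PathA r) {a b : ℕ} (hab : a < b) (hb : b ≤ r) :
    D n a b ∈ c.R := by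
  have h := c.act_C_D hrn hA (k := a) (j := b - 1) (a := b - 1) (b := b) (by omega) (by omega)
    (by omega) hb
  have h1 : cyc a (b - 1) (b - 1) = a := by simp [cyc]
  have h2 : cyc a (b - 1) b = b := by simp only [cyc]; split_ifs <;> omega
  rw [h1, h2] at h
  rw [← h]
  apply c.act_mem
  obtain ⟨b, rfl⟩ : ∃ d, b = d + 1 := ⟨b - 1, by omega⟩
  simp only [Nat.add_sub_cancel]
  rw [c.D_succ b (by omega)]
  exact c.sroot_mem _

/-- The Cartan matrix is symmetric on `Δ_P`. -/
lemma pair_comm_of_supp (hA : c.PathA r) {x y : Fin n → ℤ} (hx : ∀ i : Fin n, r ≤ i → x i = 0)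
    (hy : ∀ i : Fin n, r ≤ i → y i = 0) : c.pair x y = c.pair y x := by
  simp only [pair]
  rw [Finset.sum_comm]
  refine Finset.sum_congr rfl fun j _ => Finset.sum_congr rfl fun i _ => ?_
  by_cases hi : r ≤ (i : ℕ)
  · simp [hx i hi]
  by_cases hj : r ≤ (j : ℕ)
  · simp [hy j hj]
  have hs : c.A i j = c.A j i := by
    obtain ⟨h1, h2⟩ := hA i j (by omega) (by omega)
    obtain ⟨h3, h4⟩ := hA j i (by omega) (by omega)
    by_cases e : i = j
    · rw [e]
    · have : (i : ℕ) ≠ j := fun h => e (Fin.ext h)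
      by_cases e1 : (i : ℕ) + 1 = j ∨ (j : ℕ) + 1 = i
      · rw [h1 e1, h3 e1.symm]
      · rw [h2 (by omega), h4 (by omega)]
  rw [hs]
  ring

lemma cor_D (hrn : r < n) (hA : c.PathA r) {a b : ℕ} (hab : a < b) (hb : b ≤ r) :
    c.cor (D n a b) = D n a b := by
  induction b with
  | zero => omega
  | succ b ih =>
    by_cases e : a = b
    · subst e
      rw [c.D_succ a (by omega)]
      exact c.cor_simple _
    · have hbn : b < n := by omega
      have ih' := ih (by omega) (by omega)
      have hact := c.act_s_D hrn hA ⟨b, hbn⟩ (by simp; omega) (a := a) (b := b) (by omega)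
        (by omega)
      have h1 : Equiv.swap b (b + 1) a = a :=
        Equiv.swap_apply_of_ne_of_ne (by omega) (by omega)
      simp only [h1, Equiv.swap_apply_left] at hact
      have h2 := c.cor_refl _ (c.simple_mem ⟨b, hbn⟩) _
        (c.D_mem hrn hA (a := a) (b := b) (by omega) (by omega))
      rw [ih', c.cor_simple] at h2
      change c.cor (c.act (c.s ⟨b, hbn⟩) _) =
        D n a b - c.pair (Pi.single ⟨b, hbn⟩ 1) (D n a b) • Pi.single ⟨b, hbn⟩ 1 at h2
      rw [c.pair_comm_of_supp hA, hact] at h2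
      · rw [h2, ← hact, act_s]
        rfl
      · intro i hi
        have : i ≠ ⟨b, hbn⟩ := by
          intro h; rw [h] at hi; simp at hi; omega
        simp [this]
      · intro i hi
        simp only [D, X, Pi.sub_apply]
        split_ifs <;> omega

/-! ### Minimal representatives in the type `A` tower -/

lemma mem_deltaSet {j : ℕ} (hj : j ≤ r) (i : Fin n) : i ∈ deltaSet n r j ↔ (i : ℕ) < j := by
  have : j ≠ r + 1 := by omega
  simp [deltaSet, this]

lemma deltaSet_mono {i j : ℕ} (hij : i ≤ j) (hj : j ≤ r + 1) :
    deltaSet n r i ⊆ deltaSet n r j := by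
  by_cases e : j = r + 1
  · intro x _; simp [deltaSet, e]
  · intro x
    rw [mem_deltaSet (by omega), mem_deltaSet (by omega)]
    omega

/-- `W_{Δ_j}`. -/
abbrev WD (r j : ℕ) : Subgroup c.W := c.Wsub (deltaSet n r j)

lemma sN_mem (hrn : r < n) {t j : ℕ} (ht : t < j) (hj : j ≤ r) : c.sN t ∈ c.WD r j := by
  rw [c.sN_eq (by omega)]
  exact c.s_mem_Wsub ((mem_deltaSet hj _).2 ht)

lemma C_mem (hrn : r < n) {k j : ℕ} (hj : j ≤ r) : c.C k j ∈ c.WD r j := by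
  induction j with
  | zero => exact one_mem _
  | succ j ih =>
    simp only [C]
    split_ifs
    · exact mul_mem (c.Wsub_mono (deltaSet_mono (by omega) (by omega)) (ih (by omega)))
        (c.sN_mem hrn (by omega) hj)
    · exact one_mem _

lemma C_good (hrn : r < n) (hA : c.PathA r) {k j : ℕ} (hk : k ≤ j + 1) (hj : j + 1 ≤ r) :
    c.Good (deltaSet n r j) (c.C k (j + 1)) := by
  intro i hi
  rw [mem_deltaSet (by omega)] at hi
  rw [← c.D_succ i i.2, c.act_C_D hrn hA hk hj (by omega) (by omega)]
  apply pos_D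
  simp only [cyc]
  split_ifs <;> omega

lemma len_C (hrn : r < n) (hA : c.PathA r) {k j : ℕ} (hk : k ≤ j) (hj : j ≤ r) :
    c.len (c.C k j) = j - k := by
  induction j with
  | zero => simp [C, len_one]
  | succ j ih =>
    by_cases e : k = j + 1
    · subst e
      simp [C_self, len_one]
    · rw [C_succ _ (by omega), c.sN_eq (by omega), len_mul_s_of_pos, ih (by omega) (by omega)]
      · omega
      · rw [← c.D_succ j (by omega), c.act_C_D hrn hA (by omega) (by omega) (by omega) hj]
        apply pos_D
        simp only [cyc]
        split_ifs <;> omega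

lemma C_mul_σ (hrn : r < n) (hA : c.PathA r) {k j a b : ℕ} (hk : k ≤ j) (hj : j ≤ r)
    (hab : a < b) (hb : b ≤ r) :
    c.C k j * c.σ (D n a b) = c.σ (D n (cyc k j a) (cyc k j b)) * c.C k j := by
  rw [← c.act_C_D hrn hA hk hj (by omega) hb, c.refl_act _ _ (c.D_mem hrn hA hab hb)]
  group

lemma C_mul_sN (hrn : r < n) (hA : c.PathA r) {k j t : ℕ} (hk : k ≤ t) (htj : t + 1 < j)
    (hj : j ≤ r) : c.C k j * c.sN t = c.sN (t + 1) * c.C k j := by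
  have h := c.C_mul_σ hrn hA (k := k) (j := j) (a := t) (b := t + 1) (by omega) hj (by omega)
    (by omega)
  have h1 : cyc k j t = t + 1 := by simp only [cyc]; split_ifs <;> omega
  have h2 : cyc k j (t + 1) = t + 1 + 1 := by simp only [cyc]; split_ifs <;> omega
  rwa [h1, h2, σ_D_succ c (by omega), σ_D_succ c (by omega)] at h

lemma sN_comm_C (hrn : r < n) (hA : c.PathA r) {k j t : ℕ} (hk : t + 1 < k) (hkj : k ≤ j)
    (hj : j ≤ r) : c.C k j * c.sN t = c.sN t * c.C k j := by
  have h := c.C_mul_σ hrn hA (k := k) (j := j) (a := t) (b := t + 1) (by omega) hj (by omega)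
    (by omega)
  have h1 : cyc k j t = t := by simp only [cyc]; split_ifs <;> omega
  have h2 : cyc k j (t + 1) = t + 1 := by simp only [cyc]; split_ifs <;> omega
  rwa [h1, h2, σ_D_succ c (by omega)] at h

/-- The products `C k (j+1) · W_{Δ_j}` exhaust `W_{Δ_{j+1}}`, since their union is stable under
left multiplication by the generators. -/
lemma exists_C_mul (hrn : r < n) (hA : c.PathA r) {j : ℕ} (hj : j + 1 ≤ r) :
    ∀ w ∈ c.WD r (j + 1), ∃ k ≤ j + 1, ∃ u ∈ c.WD r j, w = c.C k (j + 1) * u := by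
  apply c.Wsub_induction_left
  · exact ⟨j + 1, le_rfl, 1, one_mem _, by simp [C_self]⟩
  · rintro w i hi _ ⟨k, hk, u, hu, rfl⟩
    rw [mem_deltaSet hj] at hi
    obtain ⟨t, ht⟩ := i
    simp only at hi
    rw [← c.sN_eq ht]
    rcases lt_trichotomy t k with h | h | h
    · by_cases e : t + 1 = k
      · subst e
        exact ⟨t, by omega, u, hu, by rw [c.C_succ_left (k := t) (by omega), mul_assoc]⟩
      · refine ⟨k, hk, c.sN t * u, mul_mem (c.sN_mem hrn (by omega) (by omega)) hu, ?_⟩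
        rw [← mul_assoc, ← mul_assoc, c.sN_comm_C hrn hA (by omega) hk hj]
    · subst h
      refine ⟨t + 1, by omega, u, hu, ?_⟩
      rw [c.C_succ_left (k := t) (by omega), mul_assoc, ← mul_assoc, c.sN_mul_sN ht, one_mul]
    · obtain ⟨t, rfl⟩ : ∃ d, t = d + 1 := ⟨t - 1, by omega⟩
      refine ⟨k, hk, c.sN t * u, mul_mem (c.sN_mem hrn (by omega) (by omega)) hu, ?_⟩
      rw [← mul_assoc, ← mul_assoc, c.C_mul_sN hrn hA (by omega) (by omega) hj]

lemma MinRep.eq_C {c : RootSystemData n} (hrn : r < n) (hA : c.PathA r) {j : ℕ} (hj : j + 1 ≤ r)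
    {v : c.W} (hv : c.MinRep (deltaSet n r (j + 1)) (deltaSet n r j) v) :
    ∃ k ≤ j + 1, v = c.C k (j + 1) := by
  obtain ⟨k, hk, u, hu, h⟩ := c.exists_C_mul hrn hA hj v hv.1
  refine ⟨k, hk, hv.good.unique (c.C_good hrn hA hk hj) (one_mem _) hu ?_⟩
  rw [mul_one, h]

lemma C_minRep (hrn : r < n) (hA : c.PathA r) {k j : ℕ} (hk : k ≤ j + 1) (hj : j + 1 ≤ r) :
    c.MinRep (deltaSet n r (j + 1)) (deltaSet n r j) (c.C k (j + 1)) :=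
  (c.C_good hrn hA hk hj).minRep (c.C_mem hrn hj)

/-- `s_{j+2}` commutes with `W_{Δ_j}`. -/
lemma sN_comm_WD (hrn : r < n) (hA : c.PathA r) {j : ℕ} (hj : j + 2 ≤ r) :
    ∀ u ∈ c.WD r j, u * c.sN (j + 1) = c.sN (j + 1) * u := by
  apply c.Wsub_induction_left
  · simp
  · intro u i hi _ ih
    rw [mem_deltaSet (by omega)] at hi
    have h := c.sN_comm_C hrn hA (k := j + 1) (j := j + 2) (t := i) (by omega) (by omega) hj
    rw [C_succ _ le_rfl, C_self, one_mul, c.sN_eq i.2] at h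
    rw [mul_assoc, ih, ← mul_assoc, ← mul_assoc, h]

end TypeA

/-! ### Decompositions -/

section Decomp

variable {n : ℕ} (c : RootSystemData n) {r : ℕ}

/-- The product `f (j-1) ⋯ f 1 f 0`. -/
def P (f : ℕ → c.W) : ℕ → c.W
  | 0 => 1
  | j + 1 => f j * P f j

/-- All factors are minimal representatives, `f j ∈ W_{Δ_{j+1}}^{Δ_j}` for `j ≤ r`. -/
def Tower (r : ℕ) (f : ℕ → c.W) : Prop :=
  ∀ j ≤ r, c.MinRep (deltaSet n r (j + 1)) (deltaSet n r j) (f j)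

lemma P_mem {f : ℕ → c.W} (hf : c.Tower r f) {j : ℕ} (hj : j ≤ r + 1) : c.P f j ∈ c.WD r j := by
  induction j with
  | zero => exact one_mem _
  | succ j ih =>
    exact mul_mem (hf j (by omega)).1
      (c.Wsub_mono (deltaSet_mono (by omega) (by omega)) (ih (by omega)))

lemma len_P {f : ℕ → c.W} (hf : c.Tower r f) {j : ℕ} (hj : j ≤ r + 1) :
    c.len (c.P f j) = ∑ i ∈ Finset.range j, c.len (f i) := by
  induction j with
  | zero => simp [P, len_one]
  | succ j ih =>
    rw [Finset.sum_range_succ, ← ih (by omega), P,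
      (hf j (by omega)).good.len_mul _ (c.P_mem hf (by omega)), add_comm]

lemma P_unique {f g : ℕ → c.W} (hf : c.Tower r f) (hg : c.Tower r g) {j : ℕ} (hj : j ≤ r + 1)
    (h : c.P f j = c.P g j) : ∀ i < j, f i = g i := by
  induction j with
  | zero => intro i hi; omega
  | succ j ih =>
    have h1 : f j = g j := (hf j (by omega)).good.unique (hg j (by omega)).good
      (c.P_mem hf (by omega)) (c.P_mem hg (by omega)) h
    simp only [P, h1, mul_right_inj] at h
    intro i hi
    by_cases e : i = j
    · rw [e, h1]
    · exact ih (by omega) h i (by omega)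

lemma P_congr {f g : ℕ → c.W} {j : ℕ} (h : ∀ i < j, f i = g i) : c.P f j = c.P g j := by
  induction j with
  | zero => rfl
  | succ j ih => rw [P, P, h j (by omega), ih fun i hi => h i (by omega)]

lemma P_mul_of_ge {f g : ℕ → c.W} {m : ℕ} (x : c.W) (hm : c.P g m = c.P f m * x) {j : ℕ}
    (hj : m ≤ j) (h : ∀ i, m ≤ i → g i = f i) : c.P g j = c.P f j * x := by
  induction j, hj using Nat.le_induction with
  | base => exact hm
  | succ j hj ih => rw [P, P, ih, h j hj, mul_assoc]

lemma ofFn_prod (f : ℕ → c.W) (N : ℕ) :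
    (List.ofFn fun i : Fin N => f i).reverse.prod = c.P f N := by
  induction N with
  | zero => simp [P]
  | succ N ih =>
    rw [List.ofFn_succ', List.concat_eq_append, List.reverse_append]
    simp only [List.reverse_cons, List.reverse_nil, List.nil_append, List.singleton_append,
      List.prod_cons, Fin.val_last, Fin.val_castSucc]
    rw [ih, P]

lemma IsDecomp.exists_tower {c : RootSystemData n} {w : c.W} {v : Fin (r + 1) → c.W}
    (h : c.IsDecomp r w v) :
    ∃ f : ℕ → c.W, c.Tower r f ∧ w = c.P f (r + 1) ∧ ∀ k, v k = f k := by
  refine ⟨fun j => if hj : j < r + 1 then v ⟨j, hj⟩ else 1, ?_, ?_, ?_⟩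
  · intro j hj
    have hj' : j < r + 1 := by omega
    simp only [hj', dite_true]
    exact h.1 ⟨j, hj'⟩
  · rw [h.2, ← ofFn_prod]
    simp
  · intro k
    beta_reduce
    rw [dif_pos k.2]

/-- The factors of a decomposition of `w` are those of any tower with product `w`. -/
lemma IsDecomp.eq_of_tower {c : RootSystemData n} {f : ℕ → c.W} (hf : c.Tower r f) {w : c.W}
    (hw : w = c.P f (r + 1)) {v : Fin (r + 1) → c.W} (h : c.IsDecomp r w v) (k : Fin (r + 1)) :
    v k = f k := by
  obtain ⟨g, hg, h1, h2⟩ := h.exists_tower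
  rw [h2, c.P_unique hg hf le_rfl (h1.symm.trans hw) k k.2]

lemma Tower.len {c : RootSystemData n} {f : ℕ → c.W} (hf : c.Tower r f) :
    (c.len (c.P f (r + 1)) : ℤ) = ∑ k : Fin (r + 1), (c.len (f k) : ℤ) := by
  rw [c.len_P hf le_rfl, Finset.sum_range]
  push_cast
  rfl

/-! ### The degrees of the quantum parameters -/

lemma grQlam_D (c : RootSystemData n) {a m : ℕ} (hmn : m ≤ n) (ham : a ≤ m) (k : Fin (r + 1)) :
    grQlam n r (D n a m) k =
      (if a ≤ (k : ℕ) ∧ (k : ℕ) < m then (k : ℤ) + 2 else 0) -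
        (if a ≤ (k : ℕ) + 1 ∧ (k : ℕ) + 1 < m then (k : ℤ) + 1 else 0) := by
  induction m, ham using Nat.le_induction with
  | base =>
    simp only [grQlam, D, sub_self, Pi.zero_apply, zero_mul, Finset.sum_const_zero]
    split_ifs <;> omega
  | succ m ham ih =>
    have hmn' : m < n := by omega
    have h1 : grQlam n r (D n a (m + 1)) k = grQlam n r (D n a m) k + grQ r m k := by
      rw [← D_add a m (m + 1), c.D_succ m hmn']
      simp [grQlam, add_mul, Finset.sum_add_distrib, sroot, Pi.single_apply]
    rw [h1, ih (by omega), grQ]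
    split_ifs <;> omega

lemma sum_grQ {j : ℕ} (hj : j < r) : ∑ k : Fin (r + 1), grQ r j k = 2 := by
  simp only [grQ]
  rw [Finset.sum_add_distrib]
  have h1 : ∑ k : Fin (r + 1), (if (k : ℕ) = j then (j : ℤ) + 2 else 0) = j + 2 := by
    rw [Finset.sum_eq_single ⟨j, by omega⟩]
    · simp
    · intro b _ hb
      rw [if_neg]
      intro h; exact hb (Fin.ext h)
    · simp
  have h2 : ∑ k : Fin (r + 1), (if (k : ℕ) + 1 = j then -(j : ℤ) else 0) = -j := by
    cases j with
    | zero => simp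
    | succ j =>
      rw [Finset.sum_eq_single ⟨j, by omega⟩]
      · simp
      · intro b _ hb
        rw [if_neg]
        intro h; exact hb (Fin.ext (by simpa using h))
      · simp
  rw [h1, h2]
  ring

/-- The total degree of `q_λ` is `⟨2ρ, λ⟩`. -/
lemma sum_grQlam {l : Fin n → ℤ} (hl : suppIn (deltaSet n r r) l) :
    ∑ k, grQlam n r l k = c.pairTwoRho l := by
  rw [pairTwoRho_eq]
  simp only [grQlam]
  rw [Finset.sum_comm]
  refine Finset.sum_congr rfl fun j _ => ?_
  rw [← Finset.mul_sum]
  by_cases hj : (j : ℕ) < r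
  · rw [sum_grQ hj]
  · rw [hl j (by rw [mem_deltaSet le_rfl]; exact hj)]
    simp

lemma sum_unit {m : ℕ} (hm : m < r + 1) :
    ∑ k : Fin (r + 1), (if (k : ℕ) = m then (1 : ℤ) else 0) = 1 := by
  rw [Finset.sum_eq_single ⟨m, hm⟩]
  · simp
  · intro b _ hb
    rw [if_neg]
    intro h; exact hb (Fin.ext h)
  · simp

/-! ### The two raising moves -/

/-- If `ℓ(v_{m+1}) < m + 1`, then `v_{m+1} = s_{k+2} ⋯ s_{m+1}` for some `k`, and multiplying it
by `s_{k+1}` on the left is the same as multiplying `w` on the right by the reflection in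
`γ = (v_m ⋯ v_1)⁻¹ (α_{k+1} + ⋯ + α_{m+1})`. -/
lemma raise_one (hrn : r < n) (hA : c.PathA r) {f : ℕ → c.W} (hf : c.Tower r f) {m : ℕ}
    (hm : m < r) (hlen : c.len (f m) < m + 1) :
    ∃ γ : Fin n → ℤ, γ ∈ c.R ∧ Pos γ ∧ c.cor γ ⟨m, by omega⟩ = 1 ∧
      ∃ g : ℕ → c.W, c.Tower r g ∧ c.P g (r + 1) = c.P f (r + 1) * c.σ γ ∧
        ∀ k, (c.len (g k) : ℤ) = (c.len (f k) : ℤ) + if k = m then 1 else 0 := by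
  obtain ⟨k, hk, hfm⟩ := (hf m (by omega)).eq_C hrn hA (by omega)
  have hlC := c.len_C hrn hA hk (by omega)
  rw [hfm, hlC] at hlen
  obtain ⟨k, rfl⟩ : ∃ d, k = d + 1 := ⟨k - 1, by omega⟩
  have hlC' := c.len_C hrn hA (k := k) (j := m + 1) (by omega) (by omega)
  set u := c.P f m with hu
  have hum : u⁻¹ ∈ c.WD r m := inv_mem (c.P_mem hf (by omega))
  have hDR := c.D_mem hrn hA (a := k) (b := m + 1) (by omega) (by omega)
  have hnot : (⟨m, by omega⟩ : Fin n) ∉ deltaSet n r m := by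
    rw [mem_deltaSet (by omega)]; simp
  have hD1 : D n k (m + 1) ⟨m, by omega⟩ = 1 := by
    simp only [D, X, Pi.sub_apply]
    split_ifs <;> omega
  have hγR := c.act_mem u⁻¹ _ hDR
  refine ⟨c.act u⁻¹ (D n k (m + 1)), hγR, ?_, ?_, Function.update f m (c.C k (m + 1)), ?_, ?_, ?_⟩
  · rcases c.pos_or_neg _ hγR with h | h
    · exact h
    · have h1 := h ⟨m, by omega⟩
      rw [c.act_Wsub_apply hnot _ hum, hD1] at h1
      omega
  · rw [c.cor_Wsub_apply hnot _ hum _ hDR, c.cor_D hrn hA (by omega) (by omega), hD1]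
  · intro j hj
    by_cases e : j = m
    · subst e
      rw [Function.update_self]
      exact c.C_minRep hrn hA (by omega) (by omega)
    · rw [Function.update_of_ne e]
      exact hf j hj
  · apply c.P_mul_of_ge (m := m + 1) _ _ (by omega)
    · intro i hi
      rw [Function.update_of_ne (by omega)]
    · have h1 : c.P (Function.update f m (c.C k (m + 1))) m = u :=
        c.P_congr fun i hi => Function.update_of_ne (by omega) _ _
      rw [P, P, h1, Function.update_self, ← hu, hfm, c.refl_act _ _ hDR, inv_inv]
      have h2 := c.C_mul_σ hrn hA (k := k + 1) (j := m + 1) (a := k) (b := m + 1) hk (by omega)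
        (by omega) (by omega)
      have h3 : cyc (k + 1) (m + 1) k = k := by simp only [cyc]; split_ifs <;> omega
      have h4 : cyc (k + 1) (m + 1) (m + 1) = k + 1 := by simp [cyc]
      rw [h3, h4, σ_D_succ c (by omega)] at h2
      rw [c.C_succ_left (k := k) (by omega), ← h2]
      group
  · intro j
    by_cases e : j = m
    · subst e
      rw [Function.update_self, hfm, hlC, hlC', if_pos rfl]
      omega
    · rw [Function.update_of_ne e, if_neg e]
      omega

/-- The factors of `w s_γ` for `γ = α_{a+1} + ⋯ + α_{m+1}`, where `f j = C (κ j) (j+1)`: the factor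
of index `m` becomes trivial, those of index `a ≤ j < m` lose their first letter, and the trivial
factor of index `a - 1` becomes the longest possible one. -/
def lowered (f : ℕ → c.W) (κ : ℕ → ℕ) (a m : ℕ) : ℕ → c.W := fun j =>
  if j = m then 1
  else if a ≤ j ∧ j < m then c.C (κ j + 1) (j + 1)
  else if j + 1 = a then c.C 0 a
  else f j

lemma lowered_step (hrn : r < n) (hA : c.PathA r) {k j : ℕ} (hk : k ≤ j) (hj : j + 2 ≤ r) :
    c.C 0 (j + 2) * c.C k (j + 1) = c.C (k + 1) (j + 1) * c.sN (j + 1) * c.C 0 (j + 2) := by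
  have key : ∀ i, k ≤ i → i ≤ j + 1 →
      c.C 0 (j + 2) * c.C k i = c.C (k + 1) (i + 1) * c.C 0 (j + 2) := by
    intro i hi
    induction i, hi using Nat.le_induction with
    | base => intro _; simp [C_self]
    | succ i hi ih =>
      intro hij
      rw [c.C_succ hi, ← mul_assoc, ih (by omega), mul_assoc,
        c.C_mul_sN hrn hA (by omega) (by omega) hj, c.C_succ (k := k + 1) (j := i + 1) (by omega),
        mul_assoc]
  rw [key (j + 1) (by omega) le_rfl, c.C_succ (by omega)]

/-- The identity behind part (2), by induction on `j` from `a` to `m`: at each step the factor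
`s_1 ⋯ s_{j+1}` moves past the next `f j`, which then loses its first letter.  At `j = m` the left
side is `v_{m+1} ⋯ v_1 s_γ` if `v_{m+1} = s_1 ⋯ s_{m+1}`. -/
lemma P_lowered (hrn : r < n) (hA : c.PathA r) {f : ℕ → c.W} {κ : ℕ → ℕ} {a m : ℕ} (ham : a ≤ m)
    (hm : m < r) (hf : c.Tower r f) (hg : c.Tower r (c.lowered f κ a m))
    (hκ : ∀ j, a ≤ j → j < m → κ j ≤ j ∧ f j = c.C (κ j) (j + 1)) (ha : ∀ b, b + 1 = a → f b = 1)
    {j : ℕ} (haj : a ≤ j) (hjm : j ≤ m) :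
    c.C 0 (j + 1) * c.P f j * c.σ (D n a (j + 1)) = c.P (c.lowered f κ a m) j := by
  induction j, haj using Nat.le_induction with
  | base =>
    rw [σ_D_succ c (by omega), c.C_succ (Nat.zero_le a)]
    cases a with
    | zero => simp [P, C_self, c.sN_mul_sN (show 0 < n by omega)]
    | succ b =>
      have h1 : c.P (c.lowered f κ (b + 1) m) b = c.P f b := by
        refine c.P_congr fun i hi => ?_
        simp only [lowered]
        rw [if_neg (by omega), if_neg (by omega), if_neg (by omega)]
      have h2 : c.lowered f κ (b + 1) m b = c.C 0 (b + 1) := by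
        simp only [lowered]
        rw [if_neg (by omega), if_neg (by omega)]
        simp
      have h3 := c.sN_comm_WD hrn hA (j := b) (by omega) _ (c.P_mem hf (by omega))
      rw [P, P, h1, h2, ha b rfl, one_mul, mul_assoc, h3, mul_assoc, ← mul_assoc (c.sN (b + 1)),
        c.sN_mul_sN (by omega), one_mul]
  | succ j haj ih =>
    have ih := ih (by omega)
    obtain ⟨hk, hfj⟩ := hκ j haj (by omega)
    have hgj : c.lowered f κ a m j = c.C (κ j + 1) (j + 1) := by
      simp only [lowered]
      rw [if_neg (by omega), if_pos ⟨haj, by omega⟩]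
    have hcf := c.sN_comm_WD hrn hA (j := j) (by omega) _ (c.P_mem hf (by omega))
    have hcg := c.sN_comm_WD hrn hA (j := j) (by omega) _ (c.P_mem hg (by omega))
    have hσ := c.C_mul_σ hrn hA (k := j + 1) (j := j + 2) (a := a) (b := j + 2) (by omega)
      (by omega) (by omega) (by omega)
    have h3 : cyc (j + 1) (j + 2) a = a := by simp only [cyc]; split_ifs <;> omega
    have h4 : cyc (j + 1) (j + 2) (j + 2) = j + 1 := by simp [cyc]
    rw [h3, h4, C_succ _ le_rfl, C_self, one_mul] at hσ
    rw [P, P, hgj, hfj, ← mul_assoc, c.lowered_step hrn hA hk (by omega), ← ih]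
    rw [← ih] at hcg
    have hss := c.sN_mul_sN (t := j + 1) (by omega)
    set s' := c.sN (j + 1)
    set p := c.P f j
    set T := c.σ (D n a (j + 1))
    set F := c.C 0 (j + 1)
    have hF : c.C 0 (j + 2) = F * s' := c.C_succ (by omega)
    rw [hF]
    -- `s' F s' p T' = s' (F p T) s'` and the bracket commutes with `s'`
    calc c.C (κ j + 1) (j + 1) * s' * (F * s') * p * c.σ (D n a (j + 1 + 1))
        = c.C (κ j + 1) (j + 1) * s' * F * (s' * p) * c.σ (D n a (j + 1 + 1)) := by
          simp only [mul_assoc]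
      _ = c.C (κ j + 1) (j + 1) * s' * F * p * (s' * c.σ (D n a (j + 2))) := by
          rw [← hcf]; simp only [mul_assoc]
      _ = c.C (κ j + 1) (j + 1) * (s' * (F * p * T * s')) := by
          rw [hσ]; simp only [mul_assoc]
      _ = c.C (κ j + 1) (j + 1) * (s' * s' * (F * p * T)) := by
          rw [hcg]; simp only [mul_assoc]
      _ = _ := by rw [hss, one_mul]

/-- If `ℓ(v_{m+1}) = m + 1`, the root is `γ = α_{a+1} + ⋯ + α_{m+1}`, where `a ≤ m` is least such
that none of the factors of index `a ≤ j < m` is trivial. -/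
lemma raise_two (hrn : r < n) (hA : c.PathA r) {f : ℕ → c.W} (hf : c.Tower r f) {m : ℕ}
    (hm : m < r) (hlen : c.len (f m) = m + 1) :
    ∃ a ≤ m, ∃ g : ℕ → c.W, c.Tower r g ∧
      c.P g (r + 1) = c.P f (r + 1) * c.σ (D n a (m + 1)) ∧
        ∀ k : Fin (r + 1), grQlam n r (D n a (m + 1)) k + (c.len (g k) : ℤ) =
          (c.len (f k) : ℤ) + if (k : ℕ) = m then 1 else 0 := by
  have hfm : f m = c.C 0 (m + 1) := by
    obtain ⟨k, hk, h⟩ := (hf m (by omega)).eq_C hrn hA (by omega)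
    rw [h, c.len_C hrn hA hk (by omega)] at hlen
    have : k = 0 := by omega
    rw [h, this]
  obtain ⟨a, ham, hne, hone⟩ : ∃ a ≤ m, (∀ j, a ≤ j → j < m → f j ≠ 1) ∧
      ∀ b, b + 1 = a → f b = 1 := by
    classical
    have hex : ∃ a, ∀ j, a ≤ j → j < m → f j ≠ 1 := ⟨m, fun j h1 h2 => by omega⟩
    refine ⟨Nat.find hex, Nat.find_min' hex (fun j h1 h2 => by omega), Nat.find_spec hex, ?_⟩
    intro b hb
    have hmin := Nat.find_min hex (m := b) (by omega)
    by_contra hfb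
    apply hmin
    intro j h1 h2
    by_cases e : j = b
    · rw [e]; exact hfb
    · exact Nat.find_spec hex j (by omega) h2
  have hκ' : ∀ j, ∃ k, a ≤ j → j < m → k ≤ j ∧ f j = c.C k (j + 1) := by
    intro j
    by_cases hj : a ≤ j ∧ j < m
    · obtain ⟨k, hk, h⟩ := (hf j (by omega)).eq_C hrn hA (by omega)
      refine ⟨k, fun _ _ => ⟨?_, h⟩⟩
      by_contra hkj
      have : k = j + 1 := by omega
      rw [this, C_self] at h
      exact hne j hj.1 hj.2 h
    · exact ⟨0, fun h1 h2 => absurd ⟨h1, h2⟩ hj⟩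
  choose κ hκ using hκ'
  have hg : c.Tower r (c.lowered f κ a m) := by
    intro j hj
    simp only [lowered]
    split_ifs with h1 h2 h3
    · have := c.C_minRep hrn hA (k := j + 1) (j := j) le_rfl (by omega)
      rwa [C_self] at this
    · exact c.C_minRep hrn hA (by have := (hκ j h2.1 h2.2).1; omega) (by omega)
    · subst h3
      exact c.C_minRep hrn hA (by omega) (by omega)
    · exact hf j hj
  refine ⟨a, ham, c.lowered f κ a m, hg, ?_, ?_⟩
  · apply c.P_mul_of_ge (m := m + 1) _ _ (by omega)
    · intro i hi
      simp only [lowered]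
      rw [if_neg (by omega), if_neg (by omega), if_neg (by omega)]
    · have h1 := c.P_lowered hrn hA ham hm hf hg hκ hone ham le_rfl
      rw [P, P, ← h1, hfm]
      simp [lowered]
  · intro k
    rw [grQlam_D c (by omega) (by omega)]
    by_cases h1 : (k : ℕ) = m
    · have : c.lowered f κ a m k = 1 := by simp [lowered, h1]
      rw [this, len_one, h1, hlen]
      split_ifs <;> omega
    by_cases h2 : a ≤ (k : ℕ) ∧ (k : ℕ) < m
    · have hl : c.lowered f κ a m k = c.C (κ k + 1) (k + 1) := by simp [lowered, h1, h2]
      obtain ⟨h3, h4⟩ := hκ k h2.1 h2.2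
      rw [hl, h4, c.len_C hrn hA (by omega) (by omega), c.len_C hrn hA (by omega) (by omega)]
      split_ifs <;> omega
    by_cases h3 : (k : ℕ) + 1 = a
    · have hl : c.lowered f κ a m k = c.C 0 a := by
        simp only [lowered, h1, h2, h3, if_true, if_false]
      rw [hl, hone k h3, len_one, c.len_C hrn hA (by omega) (by omega)]
      split_ifs <;> omega
    · have hl : c.lowered f κ a m k = f k := by simp only [lowered, h1, h2, h3, if_false]
      rw [hl]
      split_ifs <;> omega

end Decomp

end RootSystemData

/-- Let `w = v_{r+1} ⋯ v_1` be the decomposition of `w` and `1 ≤ m ≤ r`, with `Δ_P`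
of type `A_r`.
(1) If `ℓ(v_m) < m` there is `γ ∈ R^+` with `⟨χ_m, γ^∨⟩ = 1`,
`ℓ(w s_γ) = ℓ(w) + 1` and `gr(w s_γ) = gr(w) + e_m`.
(2) If `ℓ(v_m) = m` there is `γ ∈ R^+` with `γ^∨ ∈ Q_P^∨`, `⟨χ_m, γ^∨⟩ = 1`,
`ℓ(w s_γ) = ℓ(w) + 1 - ⟨2ρ, γ^∨⟩` and `gr(q_{γ^∨}) + gr(w s_γ) = gr(w) + e_m`. -/
theorem gr_raising_elements {n : ℕ} (c : RootSystemData n)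
    (r : ℕ) (hr1 : 1 ≤ r) (hrn : r < n) (hA : c.PathA r)
    (w : c.W) (v : Fin (r + 1) → c.W) (hv : c.IsDecomp r w v)
    (m : ℕ) (hm1 : 1 ≤ m) (hmr : m ≤ r) :
    (c.len (v ⟨m - 1, by omega⟩) < m →
      ∃ γ : Fin n → ℤ, γ ∈ c.R ∧ (∀ i, 0 ≤ γ i) ∧
        c.cor γ ⟨m - 1, by omega⟩ = 1 ∧
        c.len (w * c.σ γ) = c.len w + 1 ∧
        ∀ v' : Fin (r + 1) → c.W, c.IsDecomp r (w * c.σ γ) v' →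
          ∀ k : Fin (r + 1),
            (c.len (v' k) : ℤ) =
              (c.len (v k) : ℤ) + if (k : ℕ) = m - 1 then 1 else 0) ∧
    (c.len (v ⟨m - 1, by omega⟩) = m →
      ∃ γ : Fin n → ℤ, γ ∈ c.R ∧ (∀ i, 0 ≤ γ i) ∧
        suppIn (deltaSet n r r) (c.cor γ) ∧
        c.cor γ ⟨m - 1, by omega⟩ = 1 ∧
        (c.len (w * c.σ γ) : ℤ) = (c.len w : ℤ) + 1 - c.pairTwoRho (c.cor γ) ∧
        ∀ v' : Fin (r + 1) → c.W, c.IsDecomp r (w * c.σ γ) v' →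
          ∀ k : Fin (r + 1),
            grQlam n r (c.cor γ) k + (c.len (v' k) : ℤ) =
              (c.len (v k) : ℤ) + if (k : ℕ) = m - 1 then 1 else 0) := by
  obtain ⟨f, hf, rfl, hvf⟩ := hv.exists_tower
  obtain ⟨m, rfl⟩ : ∃ d, m = d + 1 := ⟨m - 1, by omega⟩
  simp only [Nat.add_sub_cancel, hvf]
  constructor
  · intro hlen
    obtain ⟨γ, h1, h2, h3, g, hg, hP, hg'⟩ := c.raise_one hrn hA hf (by omega) hlen
    refine ⟨γ, h1, h2, h3, ?_, ?_⟩
    · have hsum : (c.len (c.P g (r + 1)) : ℤ) = c.len (c.P f (r + 1)) + 1 := by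
        rw [hg.len, hf.len, Finset.sum_congr rfl fun (k : Fin (r + 1)) _ => hg' k,
          Finset.sum_add_distrib, RootSystemData.sum_unit (by omega)]
      rw [← hP]
      exact_mod_cast hsum
    · intro v' hv' k
      rw [hv'.eq_of_tower hg hP.symm k]
      exact hg' k
  · intro hlen
    obtain ⟨a, ham, g, hg, hP, hg'⟩ := c.raise_two hrn hA hf (by omega) hlen
    have hsupp : suppIn (deltaSet n r r) (RootSystemData.D n a (m + 1)) := by
      intro i hi
      rw [RootSystemData.mem_deltaSet le_rfl] at hi
      simp only [RootSystemData.D, RootSystemData.X, Pi.sub_apply]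
      split_ifs <;> omega
    refine ⟨RootSystemData.D n a (m + 1), c.D_mem hrn hA (by omega) hmr,
      RootSystemData.pos_D (by omega), ?_⟩
    rw [c.cor_D hrn hA (by omega) hmr]
    refine ⟨hsupp, ?_, ?_, ?_⟩
    · simp only [RootSystemData.D, RootSystemData.X, Pi.sub_apply]
      split_ifs <;> omega
    · rw [← hP, ← c.sum_grQlam hsupp, hg.len, hf.len]
      have hsum := Finset.sum_congr rfl fun (k : Fin (r + 1)) (_ : k ∈ Finset.univ) => hg' k
      rw [Finset.sum_add_distrib, Finset.sum_add_distrib,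
        RootSystemData.sum_unit (by omega)] at hsum
      omega
    · intro v' hv' k
      rw [hv'.eq_of_tower hg hP.symm k]
      exact hg' k
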